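/- Let B → A be a ring homomorphism such that A is a projective left B-module and a faithfully flat right B-module (via this homomorphism). Let n be a natural number and suppose that every left B-module of finite projective dimension has projective dimension at most n. If M is a left B-module with pd_B M = n, then pd_B (A ⊗_B M) = n (as a left B-module by restriction of scalars) and pd_A (A ⊗_B M) = n. -/

import Mathlib

/-!
Let `R` denote restriction of scalars. Since `A` is right flat, extension of scalars `E` is exact,
so it carries projective resolutions to projective resolutions; since `A` is left projective, so
does `R`. Hence `pd_B (R E M) ≤ pd_A (E M) ≤ pd_B M = n`. Faithful flatness makes `E` a faithful
functor, which is to say that the unit `M ⟶ R E M` is a monomorphism. Its cokernel `N` has finite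
projective dimension, hence `pd_B N ≤ n`; if `pd_B (R E M)` were less than `n`, then the short
exact sequence `0 ⟶ M ⟶ R E M ⟶ N ⟶ 0` would give `pd_B M < n`.
-/

open CategoryTheory Limits

universe u

/-- The projective dimension of an object `M` of an abelian category, as an element of
`ℕ∞ = ℕ ∪ {∞}`: the least `n` such that `M` admits a projective resolution vanishing in
degrees `> n` (and `⊤` if there is no such finite resolution). -/
noncomputable def projDim {C : Type*} [Category C] [Abelian C] (M : C) : ℕ∞ :=
  sInf {n : ℕ∞ | ∃ P : CategoryTheory.ProjectiveResolution M,
    ∀ i : ℕ, n < (i : ℕ∞) → Limits.IsZero (P.complex.X i)}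

section Resolutions

variable {C : Type*} [Category C] [Abelian C]

lemma projDim_le_natCast_iff_exists_resolution (M : C) (n : ℕ) :
    projDim M ≤ n ↔
      ∃ P : ProjectiveResolution M, ∀ i : ℕ, n < i → IsZero (P.complex.X i) := by
  constructor
  · intro h
    have nonempty : {m : ℕ∞ | ∃ P : ProjectiveResolution M,
        ∀ i : ℕ, m < i → IsZero (P.complex.X i)}.Nonempty := by
      by_contra! empty
      simp [projDim, empty] at h
    obtain ⟨P, hP⟩ := csInf_mem nonempty
    exact ⟨P, fun i hi ↦ hP i (h.trans_lt (by exact_mod_cast hi))⟩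
  · rintro ⟨P, hP⟩
    exact sInf_le ⟨P, fun i hi ↦ hP i (by exact_mod_cast hi)⟩

lemma projDim_map_le {D : Type*} [Category D] [Abelian D] (F : C ⥤ D) [F.Additive]
    [F.PreservesProjectiveObjects] [F.PreservesHomology] (M : C) :
    projDim (F.obj M) ≤ projDim M := by
  refine sInf_le_sInf ?_
  rintro n ⟨P, hP⟩
  exact ⟨F.mapProjectiveResolution P, fun i hi ↦ F.map_isZero (hP i hi)⟩

lemma hasProjectiveDimensionLE_of_resolution {M : C} (P : ProjectiveResolution M) {n : ℕ}
    (hP : ∀ i : ℕ, n < i → IsZero (P.complex.X i)) : HasProjectiveDimensionLE M n := by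
  let := HasExt.standard C
  rw [HasProjectiveDimensionLE, hasProjectiveDimensionLT_iff]
  intro i hi Y e
  obtain ⟨f, hf, rfl⟩ := P.extMk_surjective e (i + 1) rfl
  obtain rfl : f = 0 := (hP i hi).eq_of_src _ _
  simp

lemma quasiIso_toSingle₀Equiv_symm {K : ChainComplex C ℕ} {M : C} (ε : K.X 0 ⟶ M) (epi : Epi ε)
    (w : K.d 1 0 ≫ ε = 0) (exact₀ : (ShortComplex.mk _ _ w).Exact)
    (exact_succ : ∀ n, K.ExactAt (n + 1)) :
    QuasiIso ((K.toSingle₀Equiv M).symm ⟨ε, w⟩) where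
  quasiIsoAt
    | 0 => by
      have hε := ChainComplex.toSingle₀Equiv_symm_apply_f_zero ε w
      rw [ChainComplex.quasiIsoAt₀_iff, ShortComplex.quasiIso_iff_of_zeros']
      · refine (ShortComplex.exact_and_epi_g_iff_of_iso ?_).2 ⟨exact₀, epi⟩
        exact ShortComplex.isoMk (Iso.refl _) (Iso.refl _) (Iso.refl _)
          ((Category.id_comp _).trans (Category.comp_id _).symm)
          ((Category.id_comp _).trans (hε.symm.trans (Category.comp_id _).symm))
      · exact K.shape 0 0 (by simp)
      all_goals rfl
    | n + 1 => by
      rw [quasiIsoAt_iff_exactAt' _ _ (ChainComplex.exactAt_succ_single_obj M n)]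
      exact exact_succ n

lemma exactAt_succ_augment {K : ChainComplex C ℕ} {X : C} (f : K.X 0 ⟶ X)
    (w : K.d 1 0 ≫ f = 0) (exact₀ : (ShortComplex.mk _ _ w).Exact)
    (exact_succ : ∀ n, K.ExactAt (n + 1)) (n : ℕ) : (K.augment f w).ExactAt (n + 1) := by
  rw [HomologicalComplex.exactAt_iff' _ (n + 2) (n + 1) n (by simp) (by simp)]
  match n with
  | 0 => exact exact₀
  | n + 1 =>
    exact (K.exactAt_iff' (n + 2) (n + 1) n (by simp) (by simp)).1 (exact_succ n)

lemma exact_comp_mono {X Y Z W : C} {f : X ⟶ Y} {g : Y ⟶ Z} {w : f ≫ g = 0}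
    (h : (ShortComplex.mk f g w).Exact) (i : Z ⟶ W) [Mono i] :
    (ShortComplex.mk f (g ≫ i) (by rw [reassoc_of% w, zero_comp])).Exact :=
  (ShortComplex.exact_iff_of_epi_of_isIso_of_mono
    { τ₁ := 𝟙 X, τ₂ := 𝟙 Y, τ₃ := i : ShortComplex.mk f g w ⟶ .mk f (g ≫ i) _ }).1 h

lemma exact_epi_comp {X Y Z W : C} {f : X ⟶ Y} {g : Y ⟶ Z} {w : f ≫ g = 0}
    (h : (ShortComplex.mk f g w).Exact) (p : W ⟶ X) [Epi p] :
    (ShortComplex.mk (p ≫ f) g (by rw [Category.assoc, w, comp_zero])).Exact :=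
  (ShortComplex.exact_iff_of_epi_of_isIso_of_mono
    { τ₁ := p, τ₂ := 𝟙 Y, τ₃ := 𝟙 Z : ShortComplex.mk (p ≫ f) g _ ⟶ .mk f g w }).2 h

/-- The splice of a projective resolution `Q` of `S.X₁` with a short exact sequence
`0 ⟶ S.X₁ ⟶ S.X₂ ⟶ S.X₃ ⟶ 0` whose middle term is projective: the projective resolution
`⋯ ⟶ Q₁ ⟶ Q₀ ⟶ S.X₂` of `S.X₃`. -/
noncomputable def spliceResolution {S : ShortComplex C} (hS : S.ShortExact) [Projective S.X₂]
    (Q : ProjectiveResolution S.X₁) : ProjectiveResolution S.X₃ :=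
  have := hS.mono_f
  let p : Q.complex.X 0 ⟶ S.X₁ := Q.π.f 0
  have : Epi p := inferInstanceAs (Epi (Q.π.f 0))
  have hp : Q.complex.d 1 0 ≫ p = 0 := Q.complex_d_comp_π_f_zero
  have exact_p : (ShortComplex.mk _ _ hp).Exact := Q.exact₀
  { complex := Q.complex.augment (p ≫ S.f) (by rw [reassoc_of% hp, zero_comp])
    projective
      | 0 => ‹Projective S.X₂›
      | n + 1 => Q.projective n
    π := (ChainComplex.toSingle₀Equiv _ _).symm
      ⟨S.g, show (p ≫ S.f) ≫ S.g = 0 by rw [Category.assoc, S.zero, comp_zero]⟩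
    quasiIso := quasiIso_toSingle₀Equiv_symm S.g hS.epi_g _ (exact_epi_comp hS.exact p)
      (exactAt_succ_augment _ _ (exact_comp_mono exact_p S.f) Q.complex_exactAt_succ) }

lemma exists_resolution_of_hasProjectiveDimensionLE [EnoughProjectives C] (n : ℕ) (M : C)
    [HasProjectiveDimensionLE M n] :
    ∃ P : ProjectiveResolution M, ∀ i : ℕ, n < i → IsZero (P.complex.X i) := by
  induction n generalizing M with
  | zero =>
    have : Projective M := (projective_iff_hasProjectiveDimensionLE_zero M).2 ‹_›
    exact ⟨.self M, fun i hi ↦ HomologicalComplex.isZero_single_obj_X _ _ _ _ hi.ne'⟩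
  | succ n ih =>
    let S := ShortComplex.mk (kernel.ι (Projective.π M)) (Projective.π M) (kernel.condition _)
    have hS : S.ShortExact := { exact := ShortComplex.exact_kernel _ }
    have : Projective S.X₂ := Projective.projective_over M
    have : HasProjectiveDimensionLE S.X₁ n := (hS.hasProjectiveDimensionLT_X₃_iff n this).1 ‹_›
    obtain ⟨Q, hQ⟩ := ih S.X₁
    refine ⟨spliceResolution hS Q, ?_⟩
    rintro (_ | i) hi
    · cases hi
    · exact hQ i (Nat.succ_lt_succ_iff.1 hi)

lemma projDim_le_natCast_iff [EnoughProjectives C] (M : C) (n : ℕ) :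
    projDim M ≤ n ↔ HasProjectiveDimensionLE M n := by
  rw [projDim_le_natCast_iff_exists_resolution]
  exact ⟨fun ⟨P, hP⟩ ↦ hasProjectiveDimensionLE_of_resolution P hP,
    fun _ ↦ exists_resolution_of_hasProjectiveDimensionLE n M⟩

end Resolutions

section ShortExact

variable {C : Type*} [Category C] [Abelian C] [EnoughProjectives C]

lemma projDim_X₁_le {S : ShortComplex C} (hS : S.ShortExact) {n : ℕ∞} (h₂ : projDim S.X₂ ≤ n)
    (h₃ : projDim S.X₃ ≤ n + 1) : projDim S.X₁ ≤ n := by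
  induction n with
  | top => exact le_top
  | coe n =>
    rw [← Nat.cast_add_one] at h₃
    rw [projDim_le_natCast_iff] at *
    exact hS.hasProjectiveDimensionLT_X₁ (n + 1) h₂ h₃

lemma projDim_X₃_le {S : ShortComplex C} (hS : S.ShortExact) {n : ℕ∞} (h₁ : projDim S.X₁ ≤ n)
    (h₂ : projDim S.X₂ ≤ n + 1) : projDim S.X₃ ≤ n + 1 := by
  induction n with
  | top => exact le_top
  | coe n =>
    rw [← Nat.cast_add_one] at *
    rw [projDim_le_natCast_iff] at *
    exact hS.hasProjectiveDimensionLT_X₃ (n + 1) h₁ h₂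

lemma projDim_eq_of_mono {n : ℕ} (hbound : ∀ N : C, projDim N ≠ ⊤ → projDim N ≤ n)
    {M N : C} (i : M ⟶ N) [Mono i] (hM : projDim M = n) (hN : projDim N ≠ ⊤) :
    projDim N = n := by
  let S := ShortComplex.mk i (cokernel.π i) (cokernel.condition i)
  have hS : S.ShortExact := { exact := ShortComplex.exact_cokernel i }
  have hN_le : projDim N ≤ n := hbound N hN
  have hcoker_fin : projDim S.X₃ ≤ n + 1 := projDim_X₃_le hS hM.le (hN_le.trans le_self_add)
  have hcoker : projDim S.X₃ ≤ n := hbound _ (ne_top_of_le_ne_top (by simp) hcoker_fin)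
  refine hN_le.antisymm (not_lt.1 fun hlt ↦ ?_)
  obtain _ | m := n
  · simp at hlt
  · rw [Nat.cast_add_one] at hM hlt hcoker
    have hM_le : projDim M ≤ m := projDim_X₁_le hS (Order.le_of_lt_add_one hlt) hcoker
    rw [hM, ENat.add_one_le_iff (by simp)] at hM_le
    exact hM_le.false

end ShortExact

lemma faithful_of_isZero_of_isZero_map {C D : Type*} [Category C] [Category D] [Abelian C]
    [Preadditive D] (F : C ⥤ D) [F.Additive] [F.PreservesMonomorphisms]
    [F.PreservesEpimorphisms] (hF : ∀ X : C, IsZero (F.obj X) → IsZero X) : F.Faithful where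
  map_injective {X Y f g} hfg := by
    have comp_eq_zero : F.map (factorThruImage (f - g)) ≫ F.map (image.ι (f - g)) = 0 := by
      rw [← F.map_comp, image.fac, F.map_sub, hfg, sub_self]
    have : IsZero (image (f - g)) :=
      hF _ (IsZero.of_mono_eq_zero _ (zero_of_epi_comp _ comp_eq_zero))
    rw [← sub_eq_zero, ← image.fac (f - g), this.eq_of_src (image.ι (f - g)) 0, comp_zero]

theorem projDim_extendScalars_eq_of_sup_general {C D : Type*} [Category C] [Category D]
    [Abelian C] [Abelian D] [EnoughProjectives C] {L : C ⥤ D} {R : D ⥤ C} (adj : L ⊣ R)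
    [L.PreservesMonomorphisms] [R.PreservesEpimorphisms] [R.PreservesProjectiveObjects]
    (hL : ∀ X : C, IsZero (L.obj X) → IsZero X) {n : ℕ}
    (hbound : ∀ N : C, projDim N ≠ ⊤ → projDim N ≤ n) {M : C} (hM : projDim M = n) :
    projDim (R.obj (L.obj M)) = n ∧ projDim (L.obj M) = n := by
  have := adj.isLeftAdjoint
  have := adj.isRightAdjoint
  have : R.Additive := R.additive_of_preserves_binary_products
  have := adj.left_adjoint_additive
  have := L.preservesHomology_of_preservesMonos_and_cokernels
  have := R.preservesHomology_of_preservesEpis_and_kernels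
  have := L.preservesProjectiveObjects_of_adjunction_of_preservesEpimorphisms adj
  have hLM : projDim (L.obj M) ≤ n := hM ▸ projDim_map_le L M
  have hRLM : projDim (R.obj (L.obj M)) ≤ projDim (L.obj M) := projDim_map_le R (L.obj M)
  have := faithful_of_isZero_of_isZero_map L hL
  have hRLM_eq : projDim (R.obj (L.obj M)) = n :=
    projDim_eq_of_mono hbound (adj.unit.app M) hM
      (ne_top_of_le_ne_top (ENat.natCast_ne_top n) (hRLM.trans hLM))
  exact ⟨hRLM_eq, hLM.antisymm (hRLM_eq ▸ hRLM)⟩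

section ChangeOfRings

universe u₁ u₂ v

variable {B : Type u₁} {A : Type u₂} [Ring B] [Ring A] (f : B →+* A)
  [Module.Projective B ((ModuleCat.restrictScalars f).obj (ModuleCat.of A A))]

lemma coextendScalars_preservesEpimorphisms :
    (ModuleCat.coextendScalars.{u₁, u₂, v} f).PreservesEpimorphisms where
  preserves {X Y} g hg := by
    rw [ModuleCat.epi_iff_surjective] at hg ⊢
    intro φ
    obtain ⟨ψ, hψ⟩ := Module.projective_lifting_property g.hom
      (ModuleCat.CoextendScalars.equiv f Y φ) hg
    exact ⟨(ModuleCat.CoextendScalars.equiv f X).symm ψ,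
      (ModuleCat.CoextendScalars.equiv f Y).injective hψ⟩

lemma restrictScalars_preservesProjectiveObjects :
    (ModuleCat.restrictScalars.{max v u₂} f).PreservesProjectiveObjects :=
  have := coextendScalars_preservesEpimorphisms f
  Functor.preservesProjectiveObjects_of_adjunction_of_preservesEpimorphisms
    (ModuleCat.restrictCoextendScalarsAdj f)

end ChangeOfRings

/-- Let `f : B →+* A` be a ring homomorphism such that `A` is projective as a left `B`-module
and faithfully flat as a right `B`-module (via `f`).  Let `n : ℕ` and suppose that every left
`B`-module of finite projective dimension has projective dimension at most `n`.  If `M` is a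
left `B`-module with `pd_B M = n`, then `pd_B (A ⊗_B M) = n` (as a left `B`-module by
restriction of scalars) and `pd_A (A ⊗_B M) = n`.

The extension-of-scalars functor `A ⊗_B -` is encoded as a functor
`E : ModuleCat B ⥤ ModuleCat A` that is left adjoint to restriction of scalars along `f`
(any such left adjoint is naturally isomorphic to `A ⊗_B -`).  Being a left adjoint, `E` is
automatically right exact, so faithful flatness of `A` as a right `B`-module is exactly the
statement that `E` preserves monomorphisms (flatness) and sends no nonzero module to zero. -/
theorem projDim_extendScalars_eq_of_sup (B A : Type u) [Ring B] [Ring A] (f : B →+* A)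
    (hAproj : Module.Projective B ((ModuleCat.restrictScalars f).obj (ModuleCat.of A A)))
    (E : ModuleCat.{u} B ⥤ ModuleCat.{u} A) (adj : E ⊣ ModuleCat.restrictScalars f)
    (hflat : E.PreservesMonomorphisms)
    (hfaithful : ∀ X : ModuleCat.{u} B, Limits.IsZero (E.obj X) → Limits.IsZero X)
    (n : ℕ)
    (hbound : ∀ N : ModuleCat.{u} B, projDim N ≠ ⊤ → projDim N ≤ (n : ℕ∞))
    (M : ModuleCat.{u} B) (hM : projDim M = (n : ℕ∞)) :
    projDim ((ModuleCat.restrictScalars f).obj (E.obj M)) = (n : ℕ∞) ∧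
      projDim (E.obj M) = (n : ℕ∞) := by
  have := restrictScalars_preservesProjectiveObjects f
  exact projDim_extendScalars_eq_of_sup_general adj hfaithful hbound hM
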